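/- arXiv:gr-qc/0501013 — 2 statements merged into one kernel-verified Lean document; each statement's English description precedes it below -/
import Mathlib

section
/- Let a₀ > 0, let ψ be continuous and strictly positive on (0, a₀], let 0 < t_s < ∞, and let a : [0, t_s) → (0, a₀] be differentiable with a(0) = a₀ and a'(t) = −ψ(a(t)) for all t ∈ [0, t_s). If a(t) → 0 as t → t_s⁻, then the function x ↦ 1/ψ(x) is integrable on the interval (0, a₀) and t_s = ∫₀^{a₀} (1/ψ(x)) dx. -/
/-- Forward direction of Theorem 1 of the paper (singularity formation): if the
scale factor `a`, solving the collapse ODE `a' = -ψ(a)` with `a 0 = a₀`, tends to `0`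
at the finite comoving time `t_s`, then `1/ψ` is integrable on `(0, a₀)` and the
collapse time is `t_s = ∫₀^{a₀} da / ψ(a)`. -/
theorem stmt1 (a₀ t_s : ℝ) (ha₀ : 0 < a₀) (hts : 0 < t_s)
    (ψ a : ℝ → ℝ)
    (hψc : ContinuousOn ψ (Set.Ioc 0 a₀))
    (hψpos : ∀ x ∈ Set.Ioc 0 a₀, 0 < ψ x)
    (ha_mem : ∀ t ∈ Set.Ico 0 t_s, a t ∈ Set.Ioc 0 a₀)
    (ha0 : a 0 = a₀)
    (hode : ∀ t ∈ Set.Ico 0 t_s,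
      HasDerivWithinAt a (-ψ (a t)) (Set.Ico 0 t_s) t)
    (hlim : Filter.Tendsto a (nhdsWithin t_s (Set.Iio t_s)) (nhds 0)) :
    MeasureTheory.IntegrableOn (fun x => 1 / ψ x) (Set.Ioo 0 a₀) ∧
      t_s = ∫ x in Set.Ioo 0 a₀, 1 / ψ x := by
  have hcont : ContinuousOn a (Set.Ico 0 t_s) := fun t ht => (hode t ht).continuousWithinAt
  have hanti : StrictAntiOn a (Set.Ico 0 t_s) := by
    refine strictAntiOn_of_hasDerivWithinAt_neg (f' := fun t => -ψ (a t)) (convex_Ico 0 t_s) hcont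
      (fun t ht => (hode t (interior_subset ht)).mono interior_subset) ?_
    intro t ht
    have := hψpos _ (ha_mem t (interior_subset ht))
    simpa using this
  have himg : a '' Set.Ico 0 t_s = Set.Ioc 0 a₀ := by
    apply Set.Subset.antisymm
    · rintro _ ⟨t, ht, rfl⟩
      exact ha_mem t ht
    · intro y hy
      have h1 : ∀ᶠ t in nhdsWithin t_s (Set.Iio t_s), a t < y := hlim.eventually_lt_const hy.1
      have h2 : Set.Ioo 0 t_s ∈ nhdsWithin t_s (Set.Iio t_s) := Ioo_mem_nhdsLT hts
      obtain ⟨t, ht1, ht2⟩ := (h1.and h2).exists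
      have hsub : Set.Icc 0 t ⊆ Set.Ico 0 t_s := fun x hx => ⟨hx.1, hx.2.trans_lt ht2.2⟩
      obtain ⟨x, hx, hxy⟩ := intermediate_value_Icc' ht2.1.le (hcont.mono hsub)
        (show y ∈ Set.Icc (a t) (a 0) from ⟨ht1.le, ha0 ▸ hy.2⟩)
      exact ⟨x, hsub hx, hxy⟩
  have hone : Set.EqOn (fun t => |(-ψ (a t))| • (1 / ψ (a t))) (fun _ => (1 : ℝ))
      (Set.Ico 0 t_s) := by
    intro t ht
    have := hψpos _ (ha_mem t ht)
    simp only [abs_neg, abs_of_pos this, smul_eq_mul]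
    field_simp
  have hI := MeasureTheory.integrableOn_image_iff_integrableOn_abs_deriv_smul measurableSet_Ico
    hode hanti.injOn (fun x => 1 / ψ x)
  have hE := MeasureTheory.integral_image_eq_integral_abs_deriv_smul measurableSet_Ico
    hode hanti.injOn (fun x => 1 / ψ x)
  rw [himg] at hI hE
  constructor
  · refine MeasureTheory.IntegrableOn.mono_set (hI.2 ?_) Set.Ioo_subset_Ioc_self
    rw [MeasureTheory.integrableOn_congr_fun hone measurableSet_Ico]
    simp
  · rw [← MeasureTheory.integral_Ioc_eq_integral_Ioo, hE,
      MeasureTheory.setIntegral_congr_fun measurableSet_Ico hone]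
    simp [hts.le]
end

section
/- Let a₀ > 0, let ψ be continuous and strictly positive on (0, a₀], and suppose x ↦ 1/ψ(x) is integrable on (0, a₀). Set t_s = ∫₀^{a₀} (1/ψ(x)) dx. If a : [0, t_s) → (0, a₀] is differentiable with a(0) = a₀ and a'(t) = −ψ(a(t)) for all t ∈ [0, t_s), then a(t) → 0 as t → t_s⁻. -/
/-- Converse direction of Theorem 1 of the paper (singularity formation): if `1/ψ`
is integrable on `(0, a₀)` and `t_s = ∫₀^{a₀} dx / ψ(x)`, then any solution
`a : [0, t_s) → (0, a₀]` of the collapse ODE `a' = -ψ(a)`, `a 0 = a₀`, tends to `0`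
as `t → t_s⁻`, i.e. the spacetime becomes singular at the comoving time `t_s`. -/
theorem stmt2 (a₀ t_s : ℝ) (ha₀ : 0 < a₀)
    (ψ a : ℝ → ℝ)
    (hψc : ContinuousOn ψ (Set.Ioc 0 a₀))
    (hψpos : ∀ x ∈ Set.Ioc 0 a₀, 0 < ψ x)
    (hint : MeasureTheory.IntegrableOn (fun x => 1 / ψ x) (Set.Ioo 0 a₀))
    (hts : t_s = ∫ x in Set.Ioo 0 a₀, 1 / ψ x)
    (ha_mem : ∀ t ∈ Set.Ico 0 t_s, a t ∈ Set.Ioc 0 a₀)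
    (ha0 : a 0 = a₀)
    (hode : ∀ t ∈ Set.Ico 0 t_s,
      HasDerivWithinAt a (-ψ (a t)) (Set.Ico 0 t_s) t) :
    Filter.Tendsto a (nhdsWithin t_s (Set.Iio t_s)) (nhds 0) := by
  obtain ⟨g, hg⟩ : ∃ g : ℝ → ℝ, g = fun x => 1 / ψ (min x a₀) := ⟨_, rfl⟩
  have hmem : ∀ x, 0 < x → min x a₀ ∈ Set.Ioc 0 a₀ := fun x hx =>
    ⟨lt_min hx ha₀, min_le_right _ _⟩
  have hgpos : ∀ x, 0 < x → 0 < g x := by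
    intro x hx
    rw [hg]
    exact one_div_pos.mpr (hψpos _ (hmem x hx))
  have hgc : ContinuousOn g (Set.Ioi 0) := by
    rw [hg]
    refine ContinuousOn.div continuousOn_const ?_ ?_
    · exact hψc.comp (by fun_prop) (fun x hx => hmem x hx)
    · intro x hx
      exact (hψpos _ (hmem x hx)).ne'
  have hgi : MeasureTheory.IntegrableOn g (Set.Ioo 0 a₀) := by
    refine hint.congr_fun ?_ measurableSet_Ioo
    intro x hx
    simp [hg, min_eq_left hx.2.le]
  have hgI : IntervalIntegrable g MeasureTheory.volume 0 a₀ :=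
    (intervalIntegrable_iff_integrableOn_Ioo_of_le ha₀.le).2 hgi
  have hgI' : ∀ x ∈ Set.Ioc 0 a₀, IntervalIntegrable g MeasureTheory.volume 0 x := by
    intro x hx
    refine hgI.mono_set ?_
    rw [Set.uIcc_of_le hx.1.le, Set.uIcc_of_le ha₀.le]
    exact Set.Icc_subset_Icc le_rfl hx.2
  have hts' : t_s = ∫ x in (0:ℝ)..a₀, g x := by
    rw [hts, intervalIntegral.integral_of_le ha₀.le, MeasureTheory.integral_Ioc_eq_integral_Ioo]
    refine MeasureTheory.setIntegral_congr_fun measurableSet_Ioo ?_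
    intro x hx
    simp [hg, min_eq_left hx.2.le]
  have hpos : ∀ x ∈ Set.Ioc 0 a₀, 0 < ∫ y in (0:ℝ)..x, g y := by
    intro x hx
    exact intervalIntegral.intervalIntegral_pos_of_pos_on (hgI' x hx)
      (fun y hy => hgpos y hy.1) hx.1
  have hF : ∀ x ∈ Set.Ioc 0 a₀, HasDerivAt (fun u => ∫ y in (0:ℝ)..u, g y) (g x) x := by
    intro x hx
    exact intervalIntegral.integral_hasDerivAt_right (hgI' x hx)
      (hgc.stronglyMeasurableAtFilter isOpen_Ioi x hx.1)
      (hgc.continuousAt (Ioi_mem_nhds hx.1))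
  have hG : ∀ t ∈ Set.Ico 0 t_s,
      HasDerivWithinAt (fun t => (∫ y in (0:ℝ)..(a t), g y) + t) 0 (Set.Ico 0 t_s) t := by
    intro t ht
    have hm := ha_mem t ht
    have h := ((hF _ hm).comp_hasDerivWithinAt t (hode t ht)).add (hasDerivWithinAt_id t _)
    have h0 : g (a t) * -ψ (a t) + 1 = 0 := by
      have := (hψpos _ hm).ne'
      simp only [hg, min_eq_left hm.2]
      field_simp
      ring
    rw [h0] at h
    exact h
  have hconst : ∀ t ∈ Set.Ico 0 t_s, (∫ y in (0:ℝ)..(a t), g y) + t = t_s := by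
    intro t ht
    have h := constant_of_has_deriv_right_zero (a := 0) (b := t)
      (f := fun t => (∫ y in (0:ℝ)..(a t), g y) + t) ?_ ?_ t ⟨ht.1, le_rfl⟩
    · simp only [ha0, add_zero] at h
      rw [h, ← hts']
    · intro x hx
      exact ((hG x ⟨hx.1, hx.2.trans_lt ht.2⟩).continuousWithinAt).mono
        (fun y hy => ⟨hy.1, hy.2.trans_lt ht.2⟩)
    · intro x hx
      refine (hG x ⟨hx.1, hx.2.trans ht.2⟩).mono_of_mem_nhdsWithin ?_
      exact Filter.mem_of_superset (Ico_mem_nhdsGE (hx.2.trans ht.2))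
        (Set.Ico_subset_Ico_left hx.1)
  have htpos : 0 < t_s := hts' ▸ hpos a₀ ⟨ha₀, le_rfl⟩
  rw [Metric.tendsto_nhds]
  intro ε hε
  have hδ := hpos _ (hmem ε hε)
  set δ := ∫ y in (0:ℝ)..(min ε a₀), g y with hδd
  have hev : Set.Ioo (max 0 (t_s - δ)) t_s ∈ nhdsWithin t_s (Set.Iio t_s) :=
    Ioo_mem_nhdsLT (max_lt htpos (by linarith))
  filter_upwards [hev] with t ht
  have h0 : 0 < t := (le_max_left _ _).trans_lt ht.1
  have h1 : t_s - δ < t := (le_max_right _ _).trans_lt ht.1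
  have htm : t ∈ Set.Ico 0 t_s := ⟨h0.le, ht.2⟩
  have hm := ha_mem t htm
  rw [Real.dist_eq, sub_zero, abs_of_pos hm.1]
  by_contra hcon
  have hle : min ε a₀ ≤ a t := (min_le_left _ _).trans (not_lt.mp hcon)
  have hmono : δ ≤ ∫ y in (0:ℝ)..(a t), g y := by
    refine intervalIntegral.integral_mono_interval le_rfl (hmem ε hε).1.le hle ?_ (hgI' _ hm)
    filter_upwards [MeasureTheory.ae_restrict_mem measurableSet_Ioc] with y hy
    exact (hgpos y hy.1).le
  have := hconst t htm
  linarith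
end
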